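/- arXiv:2305.14777 — 2 statements merged into one kernel-verified Lean document; each statement's English description precedes it below -/
import Mathlib

section
/- Fenchel variational inequality for KL with conjugate Ψ*(t) = e^t − 1: let μ and ρ be finite measures on a measurable space with ρ absolutely continuous with respect to μ, and let g be a measurable real-valued function that is integrable with respect to ρ and such that e^g is integrable with respect to μ. Then ∫ g dρ − ∫ (e^{g} − 1) dμ ≤ KL(ρ‖μ). -/
open MeasureTheory
open scoped ENNReal
open Classical

/-- The Kullback–Leibler divergence `KL(ρ‖μ) = ∫ (r log r + 1 - r) dμ` where `r = dρ/dμ`,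
valued in `EReal`, with `KL(ρ‖μ) = +∞` when `ρ` is not absolutely continuous w.r.t. `μ`.
(The integrand `r log r + 1 - r` is nonnegative, so the lower integral captures the value.) -/
noncomputable def klDiv {α : Type*} [MeasurableSpace α] (ρ μ : Measure α) : EReal :=
  if ρ ≪ μ then
    (((∫⁻ x, ENNReal.ofReal ((ρ.rnDeriv μ x).toReal * Real.log (ρ.rnDeriv μ x).toReal
        + 1 - (ρ.rnDeriv μ x).toReal) ∂μ) : ℝ≥0∞) : EReal)
  else ⊤

/-- Fenchel variational inequality for KL with conjugate `Ψ*(t) = e^t - 1`: if `ρ ≪ μ` are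
finite measures, `g` is measurable, integrable w.r.t. `ρ`, and `e^g` is integrable w.r.t. `μ`,
then `∫ g dρ - ∫ (e^g - 1) dμ ≤ KL(ρ‖μ)`. -/
theorem kl_fenchel_variational_inequality {α : Type*} [MeasurableSpace α]
    (μ ρ : Measure α) [IsFiniteMeasure μ] [IsFiniteMeasure ρ] (hρμ : ρ ≪ μ)
    (g : α → ℝ) (hg : Measurable g) (hgρ : Integrable g ρ)
    (hgμ : Integrable (fun x => Real.exp (g x)) μ) :
    (((∫ x, g x ∂ρ) - ∫ x, (Real.exp (g x) - 1) ∂μ : ℝ) : EReal) ≤ klDiv ρ μ := by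
  have hint : Integrable (fun x => (ρ.rnDeriv μ x).toReal * g x) μ :=
    (integrable_toReal_rnDeriv_mul_iff hρμ).2 hgρ
  have hint2 : Integrable (fun x => Real.exp (g x) - 1) μ := hgμ.sub (integrable_const 1)
  have hsub : Integrable
      (fun x => (ρ.rnDeriv μ x).toReal * g x - (Real.exp (g x) - 1)) μ := hint.sub hint2
  rw [← integral_toReal_rnDeriv_mul hρμ, ← integral_sub hint hint2, klDiv, if_pos hρμ]
  have hpt : ∀ r t : ℝ, 0 ≤ r → r * t - (Real.exp t - 1) ≤ r * Real.log r + 1 - r := by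
    intro r t hr
    rcases hr.eq_or_lt with rfl | hr
    · have := Real.exp_pos t
      simp
      linarith
    · have h1 := Real.add_one_le_exp (t - Real.log r)
      rw [Real.exp_sub, Real.exp_log hr, le_div_iff₀ hr] at h1
      nlinarith
  have h1 := sub_le_self (∫⁻ x, ENNReal.ofReal
      ((ρ.rnDeriv μ x).toReal * g x - (Real.exp (g x) - 1)) ∂μ).toReal
    (ENNReal.toReal_nonneg (a := ∫⁻ x, ENNReal.ofReal
      (-((ρ.rnDeriv μ x).toReal * g x - (Real.exp (g x) - 1))) ∂μ))
  rw [← integral_eq_lintegral_pos_part_sub_lintegral_neg_part hsub] at h1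
  refine le_trans (EReal.coe_le_coe_iff.2 h1) ?_
  rw [EReal.coe_ennreal_toReal hsub.lintegral_lt_top.ne]
  exact EReal.coe_ennreal_le_coe_ennreal_iff.2
    (lintegral_mono fun x => ENNReal.ofReal_le_ofReal (hpt _ _ ENNReal.toReal_nonneg))
end

section
/- Weak duality for the semi-dual of the Unbalanced Optimal Transport problem with KL penalties: let X and Y be compact metric spaces, μ and ν probability measures on X and Y, c : X × Y → ℝ a continuous nonnegative cost function, and v : Y → ℝ a bounded continuous function. Then for every finite positive measure π on X × Y whose marginals π₀ (on X) and π₁ (on Y) are absolutely continuous with respect to μ and ν respectively, one has ∫_X (1 − e^{−v^c(x)}) dμ(x) + ∫_Y (1 − e^{−v(y)}) dν(y) ≤ ∫_{X×Y} c(x,y) dπ(x,y) + KL(π₀‖μ) + KL(π₁‖ν). -/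
open MeasureTheory
open scoped ENNReal
open Classical

theorem kl_dual_aux {α : Type*} [MeasurableSpace α] (ρ μ : Measure α) [IsFiniteMeasure ρ]
    [IsFiniteMeasure μ] (hac : ρ ≪ μ) (u : α → ℝ) (hu : Measurable u) (M : ℝ)
    (hM : ∀ x, |u x| ≤ M) :
    (((∫ x, (1 - Real.exp (-(u x))) ∂μ) - ∫ x, u x ∂ρ : ℝ) : EReal) ≤ klDiv ρ μ := by
  have hpt : ∀ r t : ℝ, 0 ≤ r → 1 - Real.exp (-t) - r * t ≤ r * Real.log r + 1 - r := by
    intro r t hr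
    rcases hr.eq_or_lt with h | h
    · subst h
      have := Real.exp_pos (-t)
      simp
      linarith
    · have h1 := Real.add_one_le_exp (-t - Real.log r)
      rw [Real.exp_sub, Real.exp_log h, le_div_iff₀ h] at h1
      linarith
  have hnn : ∀ r : ℝ, 0 ≤ r → 0 ≤ r * Real.log r + 1 - r := by
    intro r hr
    have := hpt r 0 hr
    simpa using this
  unfold klDiv
  rw [if_pos hac]
  set g : α → ℝ := fun x => (ρ.rnDeriv μ x).toReal * Real.log (ρ.rnDeriv μ x).toReal
        + 1 - (ρ.rnDeriv μ x).toReal with hg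
  have hgm : Measurable g := by fun_prop
  have hg0 : ∀ x, 0 ≤ g x := fun x => hnn _ ENNReal.toReal_nonneg
  by_cases htop : ∫⁻ x, ENNReal.ofReal (g x) ∂μ = ⊤
  · change _ ≤ ((∫⁻ x, ENNReal.ofReal (g x) ∂μ : ℝ≥0∞) : EReal)
    rw [htop]
    simp
  · have hgi : Integrable g μ :=
      (lintegral_ofReal_ne_top_iff_integrable hgm.aestronglyMeasurable (ae_of_all _ hg0)).1 htop
    change _ ≤ ((∫⁻ x, ENNReal.ofReal (g x) ∂μ : ℝ≥0∞) : EReal)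
    rw [← ofReal_integral_eq_lintegral_ofReal hgi (ae_of_all _ hg0),
      EReal.coe_ennreal_ofReal, max_eq_left (integral_nonneg hg0), EReal.coe_le_coe_iff]
    have hui : Integrable u ρ := Integrable.of_bound hu.aestronglyMeasurable M (ae_of_all _ hM)
    have hei : Integrable (fun x => 1 - Real.exp (-(u x))) μ := by
      refine (integrable_const _).sub (Integrable.of_bound (by fun_prop) (Real.exp M)
        (ae_of_all _ fun x => ?_))
      rw [Real.norm_eq_abs, Real.abs_exp]
      exact Real.exp_le_exp.2 ((neg_le_abs _).trans (hM x))
    have hri : Integrable (fun x => (ρ.rnDeriv μ x).toReal * u x) μ := by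
      simpa only [smul_eq_mul] using (integrable_rnDeriv_smul_iff hac).2 hui
    have he : ∫ x, u x ∂ρ = ∫ x, (ρ.rnDeriv μ x).toReal * u x ∂μ := by
      simpa only [smul_eq_mul] using (integral_rnDeriv_smul hac (f := u)).symm
    rw [he, ← integral_sub hei hri]
    exact integral_mono (hei.sub hri) hgi fun x => hpt _ _ ENNReal.toReal_nonneg

/-- Weak duality for the semi-dual of the unbalanced optimal transport problem with KL
penalties: for compact metric spaces `X`, `Y`, probability measures `μ`, `ν`, a continuous
nonnegative cost `c`, a bounded continuous `v : Y → ℝ`, and any finite positive measure `π`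
on `X × Y` whose marginals are absolutely continuous w.r.t. `μ` and `ν`,
`∫ (1 - e^{-v^c}) dμ + ∫ (1 - e^{-v}) dν ≤ ∫ c dπ + KL(π₀‖μ) + KL(π₁‖ν)`,
where `v^c x = inf_y (c (x, y) - v y)` is the c-transform of `v`. -/
theorem uot_semidual_weak_duality
    {X Y : Type*} [MetricSpace X] [CompactSpace X] [MeasurableSpace X] [BorelSpace X]
    [MetricSpace Y] [CompactSpace Y] [MeasurableSpace Y] [BorelSpace Y]
    (μ : Measure X) (ν : Measure Y) [IsProbabilityMeasure μ] [IsProbabilityMeasure ν]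
    (c : X × Y → ℝ) (hc : Continuous c) (hc0 : ∀ p, 0 ≤ c p)
    (v : Y → ℝ) (hv : Continuous v) (hvb : ∃ M : ℝ, ∀ y, |v y| ≤ M)
    (π : Measure (X × Y)) [IsFiniteMeasure π]
    (hπ₀ : π.map Prod.fst ≪ μ) (hπ₁ : π.map Prod.snd ≪ ν) :
    (((∫ x, (1 - Real.exp (-(⨅ y : Y, (c (x, y) - v y)))) ∂μ)
        + ∫ y, (1 - Real.exp (-(v y))) ∂ν : ℝ) : EReal) ≤
      ((∫ p, c p ∂π : ℝ) : EReal) + klDiv (π.map Prod.fst) μ + klDiv (π.map Prod.snd) ν := by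
  obtain ⟨M, hM⟩ := hvb
  haveI : Nonempty Y := ν.nonempty_of_neZero
  haveI : SecondCountableTopology Y := UniformSpace.secondCountable_of_separable Y
  haveI : SecondCountableTopology X := UniformSpace.secondCountable_of_separable X
  obtain ⟨C, hC⟩ : ∃ C, ∀ p, ‖c p‖ ≤ C := by
    obtain ⟨C, hC⟩ := isCompact_univ.exists_bound_of_continuousOn hc.continuousOn
    exact ⟨C, fun p => hC p (Set.mem_univ p)⟩
  have hCc : ∀ p, c p ≤ C := fun p => (le_abs_self _).trans (hC p)
  have hlow : ∀ x y, -M ≤ c (x, y) - v y := fun x y => by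
    have := hc0 (x, y); have := (le_abs_self _).trans (hM y); linarith
  have hbdd : ∀ x, BddBelow (Set.range fun y => c (x, y) - v y) := fun x =>
    ⟨-M, by rintro _ ⟨y, rfl⟩; exact hlow x y⟩
  set w : X → ℝ := fun x => ⨅ y : Y, (c (x, y) - v y) with hw
  have hwle : ∀ x y, w x ≤ c (x, y) - v y := fun x y => ciInf_le (hbdd x) y
  have hwm : Measurable w := by
    have h := isCompact_univ.continuous_sInf (K := (Set.univ : Set Y))
      (f := fun (x : X) (y : Y) => c (x, y) - v y)
      (by simp only [Function.HasUncurry.uncurry, id]; fun_prop)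
    simp only [Set.image_univ] at h
    exact h.measurable
  have hwb : ∀ x, |w x| ≤ C + M := fun x => by
    have y : Y := Classical.arbitrary Y
    have h1 := hwle x y
    have h2 : -M ≤ w x := le_ciInf (hlow x)
    have h3 := hCc (x, y)
    have h4 := hc0 (x, y)
    have h5 := (neg_le_abs _).trans (hM y)
    rw [abs_le]
    constructor <;> linarith
  have k0 := kl_dual_aux (π.map Prod.fst) μ hπ₀ w hwm _ hwb
  have k1 := kl_dual_aux (π.map Prod.snd) ν hπ₁ v hv.measurable _ hM
  rw [integral_map measurable_fst.aemeasurable hwm.aestronglyMeasurable] at k0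
  rw [integral_map measurable_snd.aemeasurable hv.measurable.aestronglyMeasurable] at k1
  have i0 : Integrable (fun p : X × Y => w p.1) π :=
    Integrable.of_bound (hwm.comp measurable_fst).aestronglyMeasurable _
      (ae_of_all _ fun p => hwb p.1)
  have i1 : Integrable (fun p : X × Y => v p.2) π :=
    Integrable.of_bound (hv.measurable.comp measurable_snd).aestronglyMeasurable _
      (ae_of_all _ fun p => hM p.2)
  have ic : Integrable c π :=
    Integrable.of_bound hc.measurable.aestronglyMeasurable _ (ae_of_all _ hC)
  have hle : ∫ p, w p.1 ∂π + ∫ p, v p.2 ∂π ≤ ∫ p, c p ∂π := by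
    rw [← integral_add i0 i1]
    refine integral_mono (i0.add i1) ic fun p => ?_
    have := hwle p.1 p.2
    simp only [Prod.mk.eta] at this
    show w p.1 + v p.2 ≤ c p
    linarith
  refine le_trans ?_ (add_le_add (add_le_add le_rfl k0) k1)
  rw [← EReal.coe_add, ← EReal.coe_add, EReal.coe_le_coe_iff]
  linarith
end
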